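/- arXiv:2103.15539 — 3 statements merged into one kernel-verified Lean document; each statement's English description precedes it below -/
import Mathlib

section
/- The 30-letter relation word cabbabacabbabacbcababbacababba of Thompson's group V acts as the identity on C: applying, in order (left to right), the maps c, a, b, b, a, b, a, c, a, b, b, a, b, a, c, b, c, a, b, a, b, b, a, c, a, b, a, b, b, a to any infinite binary sequence x returns x. -/
/-!
Write `0` for `false` and `1` for `true`. The word is `c u c u c b c v c v` with `u = abbaba` and
`v = ababba`. Since `a` swaps the cones `00` and `01`, and `b` has order three, `u = a b⁻¹ a b a`
and `v = a b a b⁻¹ a` are conjugates of `a`: they swap `01` with `10`, and `01` with `11`. Hence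
each of `b`, `c`, `u`, `v` permutes the five cones `000`, `001`, `01`, `10`, `11`, replacing
prefixes only, and the relation reduces to an identity between permutations of five points.
-/

/-- Cantor space of infinite binary sequences, `false` representing 0 and `true` representing 1. -/
abbrev Cantor : Type := ℕ → Bool

/-- Generator `a` of Thompson's V: 00x ↦ 01x, 01x ↦ 00x, 1x ↦ 1x. -/
def genA (x : Cantor) : Cantor :=
  if x 0 = false then (fun n => if n = 1 then !x 1 else x n) else x

/-- Generator `b` of Thompson's V: 01x ↦ 10x, 10x ↦ 11x, 11x ↦ 01x, 00x ↦ 00x. -/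
def genB (x : Cantor) : Cantor := fun n =>
  if n = 0 then
    match x 0, x 1 with
    | false, false => false
    | false, true  => true
    | true,  false => true
    | true,  true  => false
  else if n = 1 then
    match x 0, x 1 with
    | false, false => false
    | false, true  => false
    | true,  false => true
    | true,  true  => true
  else x n

/-- Generator `c` of Thompson's V: 00x ↦ 1x, 1x ↦ 00x, 01x ↦ 01x. -/
def genC (x : Cantor) : Cantor :=
  if x 0 = true then (fun n => if n ≤ 1 then false else x (n - 1))
  else if x 1 = false then (fun n => if n = 0 then true else x (n + 1))
  else x

/-- Apply a word of maps left to right (leftmost letter first). -/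
def applyWord (l : List (Cantor → Cantor)) (x : Cantor) : Cantor :=
  l.foldl (fun y f => f y) x

open Equiv

/-- The sequence `w` followed by `x`, so that `{prepend w x | x}` is the cone of `w`. Sequences are
viewed as streams, `Stream' Bool` being definitionally equal to `Cantor`. -/
def prepend (w : List Bool) (x : Cantor) : Cantor :=
  Stream'.appendStream' w x

theorem prepend_append (v w : List Bool) (x : Cantor) :
    prepend (v ++ w) x = prepend v (prepend w x) :=
  Stream'.append_append_stream v w x

theorem exists_prepend_eq (n : ℕ) (x : Cantor) :
    ∃ (w : List.Vector Bool n) (y : Cantor), prepend w.toList y = x :=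
  ⟨⟨Stream'.take n x, Stream'.length_take n x⟩, fun k => x (k + n), Stream'.append_take_drop n x⟩

/-- The cones of the words `p i` cover Cantor space: every sequence begins with some `p i`. -/
def Covers {ι : Type*} (p : ι → List Bool) : Prop :=
  ∀ x, ∃ i y, prepend (p i) y = x

/-- The map `f` acts on the cones of the words `p i` as the permutation `σ` of the indices, by
replacing the prefix `p i` with `p (σ i)`. -/
def PermutesPrefixes {ι : Type*} (p : ι → List Bool) (σ : Perm ι) (f : Cantor → Cantor) : Prop :=
  ∀ i x, f (prepend (p i) x) = prepend (p (σ i)) x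

section Prefixes

variable {ι κ : Type*} {p : ι → List Bool}

theorem covers_of_forall_exists_isPrefix (n : ℕ)
    (h : ∀ w : List.Vector Bool n, ∃ i, p i <+: w.toList) : Covers p := by
  intro x
  obtain ⟨w, y, rfl⟩ := exists_prepend_eq n x
  obtain ⟨i, v, hv⟩ := h w
  exact ⟨i, prepend v y, by rw [← prepend_append, hv]⟩

namespace PermutesPrefixes

variable {σ : Perm ι} {f : Cantor → Cantor}

-- The product is reversed because words act from left to right.
theorem applyWord_of_forall₂ {σs : List (Perm ι)} {fs : List (Cantor → Cantor)}
    (h : List.Forall₂ (PermutesPrefixes p) σs fs) :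
    PermutesPrefixes p σs.reverse.prod (applyWord fs) := by
  induction h with
  | nil => exact fun _ _ => rfl
  | @cons σ f σs fs hf _ ih =>
    intro i x
    calc applyWord (f :: fs) (prepend (p i) x)
      _ = applyWord fs (prepend (p (σ i)) x) := congrArg (applyWord fs) (hf i x)
      _ = prepend (p (σs.reverse.prod (σ i))) x := ih (σ i) x
      _ = prepend (p ((σ :: σs).reverse.prod i)) x := by simp

theorem of_refinement {q : κ → List Bool} {τ : Perm κ} (hf : PermutesPrefixes p σ f)
    (r : κ → ι) (w : κ → List Bool) (hq : ∀ k, q k = p (r k) ++ w k)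
    (hτ : ∀ k, q (τ k) = p (σ (r k)) ++ w k) : PermutesPrefixes q τ f := by
  intro k x
  rw [hq, hτ, prepend_append, prepend_append, hf]

theorem eq_id (hf : PermutesPrefixes p 1 f) (hp : Covers p) : f = id := by
  funext x
  obtain ⟨i, y, rfl⟩ := hp x
  exact hf i y

end PermutesPrefixes

end Prefixes

/-- The prefix code `00, 01, 1`, on which `c` is defined. -/
def threeCode : Fin 3 → List Bool :=
  ![[false, false], [false, true], [true]]

/-- The prefix code `00, 01, 10, 11`, on which `a` and `b` are defined. -/
def fourCode : Fin 4 → List Bool :=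
  ![[false, false], [false, true], [true, false], [true, true]]

/-- The prefix code `000, 001, 01, 10, 11`, on which the relation is verified. -/
def fiveCode : Fin 5 → List Bool :=
  ![[false, false, false], [false, false, true], [false, true], [true, false], [true, true]]

theorem covers_fiveCode : Covers fiveCode :=
  covers_of_forall_exists_isPrefix 3 (by decide)

theorem permutesPrefixes_genA : PermutesPrefixes fourCode (swap 0 1) genA := by
  intro i x
  funext n
  fin_cases i <;> rcases n with _ | _ | n <;> rfl

theorem permutesPrefixes_genB : PermutesPrefixes fourCode c[1, 2, 3] genB := by
  intro i x
  funext n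
  fin_cases i <;> rcases n with _ | _ | n <;> rfl

theorem permutesPrefixes_genC : PermutesPrefixes threeCode (swap 0 2) genC := by
  intro i x
  funext n
  fin_cases i <;> rcases n with _ | _ | n <;> rfl

/-- The map `abbaba`, the conjugate of `a` by `ba`, which swaps the prefixes `01` and `10`. -/
def swap01With10 : Cantor → Cantor :=
  applyWord [genA, genB, genB, genA, genB, genA]

/-- The map `ababba`, the conjugate of `a` by `b⁻¹a`, which swaps the prefixes `01` and `11`. -/
def swap01With11 : Cantor → Cantor :=
  applyWord [genA, genB, genA, genB, genB, genA]

theorem permutesPrefixes_swap01With10 : PermutesPrefixes fourCode (swap 1 2) swap01With10 := by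
  let α : Perm (Fin 4) := swap 0 1
  let β : Perm (Fin 4) := c[1, 2, 3]
  have hword : [α, β, β, α, β, α].reverse.prod = swap 1 2 := by decide
  rw [← hword]
  exact .applyWord_of_forall₂ (by simp [α, β, permutesPrefixes_genA, permutesPrefixes_genB])

theorem permutesPrefixes_swap01With11 : PermutesPrefixes fourCode (swap 1 3) swap01With11 := by
  let α : Perm (Fin 4) := swap 0 1
  let β : Perm (Fin 4) := c[1, 2, 3]
  have hword : [α, β, α, β, β, α].reverse.prod = swap 1 3 := by decide
  rw [← hword]
  exact .applyWord_of_forall₂ (by simp [α, β, permutesPrefixes_genA, permutesPrefixes_genB])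

-- `fiveCode` splits the cones `00` and `1` of `threeCode` in two.
theorem PermutesPrefixes.fiveCode_of_threeCode {σ : Perm (Fin 3)} {τ : Perm (Fin 5)}
    {f : Cantor → Cantor} (hf : PermutesPrefixes threeCode σ f)
    (hτ : ∀ k, fiveCode (τ k) =
      threeCode (σ (![0, 0, 1, 2, 2] k)) ++ ![[false], [true], [], [false], [true]] k) :
    PermutesPrefixes fiveCode τ f :=
  hf.of_refinement _ _ (by decide) hτ

-- `fiveCode` splits the cone `00` of `fourCode` in two.
theorem PermutesPrefixes.fiveCode_of_fourCode {σ : Perm (Fin 4)} {τ : Perm (Fin 5)}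
    {f : Cantor → Cantor} (hf : PermutesPrefixes fourCode σ f)
    (hτ : ∀ k, fiveCode (τ k) =
      fourCode (σ (![0, 0, 1, 2, 3] k)) ++ ![[false], [true], [], [], []] k) :
    PermutesPrefixes fiveCode τ f :=
  hf.of_refinement _ _ (by decide) hτ

/-- The 30-letter relation cabbabacabbabacbcababbacababba acts as the identity. -/
theorem relation_cabbabacabbabacbcababbacababba : ∀ x : Cantor,
    applyWord [genC, genA, genB, genB, genA, genB, genA, genC, genA, genB,
               genB, genA, genB, genA, genC, genB, genC, genA, genB, genA,
               genB, genB, genA, genC, genA, genB, genA, genB, genB, genA] x = x := by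
  let β : Perm (Fin 5) := c[2, 3, 4]
  let γ : Perm (Fin 5) := swap 0 3 * swap 1 4
  let μ : Perm (Fin 5) := swap 2 3
  let ν : Perm (Fin 5) := swap 2 4
  have hb : PermutesPrefixes fiveCode β genB :=
    permutesPrefixes_genB.fiveCode_of_fourCode (by decide)
  have hc : PermutesPrefixes fiveCode γ genC :=
    permutesPrefixes_genC.fiveCode_of_threeCode (by decide)
  have hu : PermutesPrefixes fiveCode μ swap01With10 :=
    permutesPrefixes_swap01With10.fiveCode_of_fourCode (by decide)
  have hv : PermutesPrefixes fiveCode ν swap01With11 :=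
    permutesPrefixes_swap01With11.fiveCode_of_fourCode (by decide)
  have hrel : [γ, μ, γ, μ, γ, β, γ, ν, γ, ν].reverse.prod = 1 := by decide
  have hword : PermutesPrefixes fiveCode [γ, μ, γ, μ, γ, β, γ, ν, γ, ν].reverse.prod
      (applyWord [genC, swap01With10, genC, swap01With10, genC, genB, genC, swap01With11,
        genC, swap01With11]) :=
    .applyWord_of_forall₂ (by simp [hb, hc, hu, hv])
  rw [hrel] at hword
  exact congrFun (hword.eq_id covers_fiveCode)
end

section
/- The 34-letter relation word acbcbabbcbbcbcabcbbcabbacbbcbcbabb of Thompson's group V acts as the identity on C: applying, in order (left to right), the maps a, c, b, c, b, a, b, b, c, b, b, c, b, c, a, b, c, b, b, c, a, b, b, a, c, b, b, c, b, c, b, a, b, b to any infinite binary sequence x returns x. -/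
/-!
An element of Thompson's group `V` replaces prefixes, so it can be followed on cones, the sets of
sequences with a given prefix. Starting from the cones of 00, 010, 011, 10, 110, 111, every letter
of the relation in turn sends each cone to a cone by replacing a prefix, so none ever has to be
subdivided. After the last letter each of the six prefixes is back where it started; since every
sequence has one of them as a prefix, the word acts trivially.

The word is cut so that conjugates stay whole: with `B = bb = b⁻¹` it is
`a(cbc)ba · B(cBc)b · (cac)(cbc) · (Bc)(aBa)(cBc)b(cb) · aB`.
-/

namespace ThompsonV

local notation "𝟬" => false
local notation "𝟭" => true

/-- Concatenation of a finite word with an infinite sequence. It is Mathlib's `++ₛ`, restated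
because `Stream' Bool` and `Cantor` agree only after unfolding. -/
def prepend (u : List Bool) (x : Cantor) : Cantor :=
  u ++ₛ x

local infixr:65 " ⌢ " => prepend

theorem append_prepend (u v : List Bool) (x : Cantor) : (u ++ v) ⌢ x = u ⌢ v ⌢ x :=
  Stream'.append_append_stream u v x

theorem exists_vector_prepend_eq (n : ℕ) (x : Cantor) :
    ∃ (w : List.Vector Bool n) (y : Cantor), w.toList ⌢ y = x :=
  ⟨⟨Stream'.take n x, Stream'.length_take n x⟩, Stream'.drop n x, Stream'.append_take_drop n x⟩

section Generators

variable (u : List Bool) (x : Cantor)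

@[simp]
theorem genA_zero_zero : genA (𝟬 :: 𝟬 :: u ⌢ x) = 𝟬 :: 𝟭 :: u ⌢ x := by
  funext n; rcases n with _ | _ | n <;> rfl

@[simp]
theorem genA_zero_one : genA (𝟬 :: 𝟭 :: u ⌢ x) = 𝟬 :: 𝟬 :: u ⌢ x := by
  funext n; rcases n with _ | _ | n <;> rfl

@[simp]
theorem genA_one : genA (𝟭 :: u ⌢ x) = 𝟭 :: u ⌢ x :=
  rfl

@[simp]
theorem genB_zero_zero : genB (𝟬 :: 𝟬 :: u ⌢ x) = 𝟬 :: 𝟬 :: u ⌢ x := by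
  funext n; rcases n with _ | _ | n <;> rfl

@[simp]
theorem genB_zero_one : genB (𝟬 :: 𝟭 :: u ⌢ x) = 𝟭 :: 𝟬 :: u ⌢ x := by
  funext n; rcases n with _ | _ | n <;> rfl

@[simp]
theorem genB_one_zero : genB (𝟭 :: 𝟬 :: u ⌢ x) = 𝟭 :: 𝟭 :: u ⌢ x := by
  funext n; rcases n with _ | _ | n <;> rfl

@[simp]
theorem genB_one_one : genB (𝟭 :: 𝟭 :: u ⌢ x) = 𝟬 :: 𝟭 :: u ⌢ x := by
  funext n; rcases n with _ | _ | n <;> rfl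

@[simp]
theorem genC_zero_zero : genC (𝟬 :: 𝟬 :: u ⌢ x) = 𝟭 :: u ⌢ x := by
  funext n; rcases n with _ | n <;> rfl

@[simp]
theorem genC_zero_one : genC (𝟬 :: 𝟭 :: u ⌢ x) = 𝟬 :: 𝟭 :: u ⌢ x :=
  rfl

@[simp]
theorem genC_one : genC (𝟭 :: u ⌢ x) = 𝟬 :: 𝟬 :: u ⌢ x := by
  funext n; rcases n with _ | _ | n <;> rfl

end Generators

/-- `f` sends the cone of sequences with prefix `u` onto the cone of sequences with prefix `v` by
replacing the prefix. -/
def MapsCone (f : Cantor → Cantor) (u v : List Bool) : Prop :=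
  ∀ x : Cantor, f (u ⌢ x) = v ⌢ x

/-- A (possibly partial) prefix-replacement table for `f`, given by its column `P` of sources and
its column `Q` of targets. -/
def MapsCones (f : Cantor → Cantor) (P Q : List (List Bool)) : Prop :=
  List.Forall₂ (MapsCone f) P Q

/-- The cones of the words in `P` cover the Cantor space; they need not be disjoint. -/
def IsPrefixCover (P : List (List Bool)) : Prop :=
  ∀ x : Cantor, ∃ u ∈ P, ∃ y : Cantor, u ⌢ y = x

section MapsCones

variable {f g : Cantor → Cantor} {u v w : List Bool} {P Q R : List (List Bool)}

theorem MapsCone.comp (hg : MapsCone g v w) (hf : MapsCone f u v) : MapsCone (g ∘ f) u w :=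
  fun x => (congrArg g (hf x)).trans (hg x)

theorem MapsCones.comp (hg : MapsCones g Q R) (hf : MapsCones f P Q) : MapsCones (g ∘ f) P R := by
  induction hf generalizing R with
  | nil => cases hg; exact .nil
  | cons hf _ ih =>
    rcases hg with _ | ⟨hg, hgs⟩
    exact .cons (hg.comp hf) (ih hgs)

theorem applyWord_append (l l' : List (Cantor → Cantor)) :
    applyWord (l ++ l') = applyWord l' ∘ applyWord l :=
  funext fun _ => List.foldl_append

theorem MapsCones.append {l l' : List (Cantor → Cantor)} (h : MapsCones (applyWord l) P Q)
    (h' : MapsCones (applyWord l') Q R) : MapsCones (applyWord (l ++ l')) P R :=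
  applyWord_append l l' ▸ h'.comp h

theorem MapsCones.eq_self (h : MapsCones f P P) (hP : IsPrefixCover P) (x : Cantor) :
    f x = x := by
  obtain ⟨u, hu, y, rfl⟩ := hP x
  exact List.forall₂_same.mp h u hu y

theorem isPrefixCover_of_forall_vector (n : ℕ)
    (h : ∀ w : List.Vector Bool n, ∃ u ∈ P, u <+: w.toList) : IsPrefixCover P := by
  intro x
  obtain ⟨w, y, rfl⟩ := exists_vector_prepend_eq n x
  obtain ⟨u, hu, v, huv⟩ := h w
  exact ⟨u, hu, v ⌢ y, by rw [← append_prepend, huv]⟩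

end MapsCones

theorem isPrefixCover_00_010_011_10_110_111 : IsPrefixCover
    [[𝟬, 𝟬], [𝟬, 𝟭, 𝟬], [𝟬, 𝟭, 𝟭], [𝟭, 𝟬], [𝟭, 𝟭, 𝟬], [𝟭, 𝟭, 𝟭]] :=
  isPrefixCover_of_forall_vector 3 (by decide)

theorem mapsCones_acbcba : MapsCones (applyWord [genA, genC, genB, genC, genB, genA])
    [[𝟬, 𝟬], [𝟬, 𝟭, 𝟬], [𝟬, 𝟭, 𝟭], [𝟭, 𝟬], [𝟭, 𝟭, 𝟬], [𝟭, 𝟭, 𝟭]]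
    [[𝟬, 𝟭, 𝟬], [𝟬, 𝟭, 𝟭], [𝟭, 𝟬], [𝟭, 𝟭], [𝟬, 𝟬, 𝟬], [𝟬, 𝟬, 𝟭]] := by
  simp [MapsCones, MapsCone, applyWord]

theorem mapsCones_bbcbbcb : MapsCones (applyWord [genB, genB, genC, genB, genB, genC, genB])
    [[𝟬, 𝟭, 𝟬], [𝟬, 𝟭, 𝟭], [𝟭, 𝟬], [𝟭, 𝟭], [𝟬, 𝟬, 𝟬], [𝟬, 𝟬, 𝟭]]
    [[𝟬, 𝟭, 𝟬], [𝟬, 𝟭, 𝟭], [𝟬, 𝟬, 𝟭], [𝟭, 𝟭], [𝟭, 𝟬], [𝟬, 𝟬, 𝟬]] := by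
  simp [MapsCones, MapsCone, applyWord]

theorem mapsCones_cabc : MapsCones (applyWord [genC, genA, genB, genC])
    [[𝟬, 𝟭, 𝟬], [𝟬, 𝟭, 𝟭], [𝟬, 𝟬, 𝟭], [𝟭, 𝟭], [𝟭, 𝟬], [𝟬, 𝟬, 𝟬]]
    [[𝟭, 𝟬], [𝟭, 𝟭], [𝟬, 𝟭], [𝟬, 𝟬, 𝟬, 𝟭], [𝟬, 𝟬, 𝟬, 𝟬], [𝟬, 𝟬, 𝟭]] := by
  simp [MapsCones, MapsCone, applyWord]

theorem mapsCones_bbcabbacbbcbcb : MapsCones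
    (applyWord [genB, genB, genC, genA, genB, genB, genA, genC, genB,
      genB, genC, genB, genC, genB])
    [[𝟭, 𝟬], [𝟭, 𝟭], [𝟬, 𝟭], [𝟬, 𝟬, 𝟬, 𝟭], [𝟬, 𝟬, 𝟬, 𝟬], [𝟬, 𝟬, 𝟭]]
    [[𝟬, 𝟭], [𝟭, 𝟬, 𝟬], [𝟭, 𝟬, 𝟭], [𝟭, 𝟭], [𝟬, 𝟬, 𝟬], [𝟬, 𝟬, 𝟭]] := by
  simp [MapsCones, MapsCone, applyWord]

theorem mapsCones_abb : MapsCones (applyWord [genA, genB, genB])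
    [[𝟬, 𝟭], [𝟭, 𝟬, 𝟬], [𝟭, 𝟬, 𝟭], [𝟭, 𝟭], [𝟬, 𝟬, 𝟬], [𝟬, 𝟬, 𝟭]]
    [[𝟬, 𝟬], [𝟬, 𝟭, 𝟬], [𝟬, 𝟭, 𝟭], [𝟭, 𝟬], [𝟭, 𝟭, 𝟬], [𝟭, 𝟭, 𝟭]] := by
  simp [MapsCones, MapsCone, applyWord]

end ThompsonV

/-- The 34-letter relation acbcbabbcbbcbcabcbbcabbacbbcbcbabb acts as the identity. -/
theorem relation_acbcbabbcbbcbcabcbbcabbacbbcbcbabb : ∀ x : Cantor,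
    applyWord [genA, genC, genB, genC, genB, genA, genB, genB, genC, genB,
               genB, genC, genB, genC, genA, genB, genC, genB, genB, genC,
               genA, genB, genB, genA, genC, genB, genB, genC, genB, genC,
               genB, genA, genB, genB] x = x :=
  ThompsonV.MapsCones.eq_self
    (ThompsonV.mapsCones_acbcba
      |>.append ThompsonV.mapsCones_bbcbbcb
      |>.append ThompsonV.mapsCones_cabc
      |>.append ThompsonV.mapsCones_bbcabbacbbcbcb
      |>.append ThompsonV.mapsCones_abb)
    ThompsonV.isPrefixCover_00_010_011_10_110_111
end

section
/- The local rule for the generator b covers every cell of every configuration exactly once: for every x ∈ X and every position i ∈ ℤ, there exist a unique triple (u,v,w) ∈ R_b and a unique j ∈ ℤ such that the word uvw (concatenation) occurs in x starting at position j and j + |u| ≤ i < j + |u| + |v|. -/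
/-- A finite word over the alphabet {0,1,2}. -/
abbrev Word : Type := List (Fin 3)

/-- Membership in the vertex shift `X` defined by the matrix [[1,1,0],[1,1,1],[1,1,1]]:
the word 02 never occurs. -/
def inVertexShift (x : ℤ → Fin 3) : Prop :=
  ∀ n : ℤ, x n = 0 → x (n + 1) ≠ 2

/-- The word `u` occurs in `x` starting at position `j`. -/
def occursAt (u : Word) (x : ℤ → Fin 3) (j : ℤ) : Prop :=
  ∀ k : ℕ, k < u.length → x (j + (k : ℤ)) = u.getD k 0

/-- Embed a binary symbol of `Fin 2` into `Fin 3`. -/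
def emb (α : Fin 2) : Fin 3 := α.castLE (by norm_num)

/-- The local rule for the generator b: the set of triples u(v)w. -/
def Rb : Set (Word × Word × Word) :=
  {t | (∃ α β γ : Fin 2, t = ([emb α, emb β], [emb γ], [])) ∨
       t = ([], [2], [2]) ∨
       t = ([], [2, 0, 0], []) ∨
       (∃ α : Fin 2, t = ([], [2, 0, 1], [emb α])) ∨
       t = ([], [2, 0, 1], [2]) ∨
       t = ([], [2, 1], [2]) ∨
       (∃ α : Fin 2, t = ([], [2, 1, 0], [emb α])) ∨
       t = ([], [2, 1, 1], [])}

/-!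
A word `uvw` with `(u, v, w) ∈ Rb` is determined by the position `j` where it is read: if `x j ≠ 2`
it is three binary symbols, of which the last is covered, and if `x j = 2` the covered part runs
from `j` up to the next `2`, but over at most three cells. Hence the cell `i` is covered exactly
from the last `2` in `[i - 2, i]`, or from `i - 2` if there is no `2` there. The word 02 is
forbidden so that 202 and 2102, the only words starting with `2` that match no triple, do not occur.
-/

lemma emb_ne_two (α : Fin 2) : emb α ≠ 2 := by
  decide +revert

lemma exists_eq_emb_iff {a : Fin 3} : (∃ α : Fin 2, a = emb α) ↔ a ≠ 2 := by
  decide +revert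

section Occurrence

variable (x : ℤ → Fin 3) (j : ℤ)

@[simp]
lemma occursAt_nil : occursAt [] x j := by
  simp [occursAt]

@[simp]
lemma occursAt_cons (a : Fin 3) (u : Word) :
    occursAt (a :: u) x j ↔ x j = a ∧ occursAt u x (j + 1) := by
  have shift (k : ℕ) : j + ((k + 1 : ℕ) : ℤ) = j + 1 + k := by push_cast; ring
  simp only [occursAt, List.length_cons, Nat.forall_lt_succ_left, List.getD_cons_zero,
    List.getD_cons_succ, shift, Nat.cast_zero, add_zero]

end Occurrence

/-- A cell from which a word `uvw` with `(u, v, w) ∈ Rb` can be read: either it carries a `2`, or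
it begins a word of three binary symbols. -/
def IsTileStart (x : ℤ → Fin 3) (j : ℤ) : Prop :=
  x j = 2 ∨ x j ≠ 2 ∧ x (j + 1) ≠ 2 ∧ x (j + 2) ≠ 2

/-- The only triple `(u, v, w)` that can belong to `Rb` and have `uvw` occur in `x` at `j`. Its
value is not in `Rb` if `j` is not a tile start, or if one of the words 202, 2102 occurs at `j`. -/
def tileAt (x : ℤ → Fin 3) (j : ℤ) : Word × Word × Word :=
  if x j ≠ 2 then ([x j, x (j + 1)], [x (j + 2)], [])
  else if x (j + 1) = 2 then ([], [2], [2])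
  else if x (j + 2) = 2 then ([], [2, x (j + 1)], [2])
  else if x (j + 1) = x (j + 2) then ([], [2, x (j + 1), x (j + 2)], [])
  else ([], [2, x (j + 1), x (j + 2)], [x (j + 3)])

/-- The position of the occurrence whose middle part covers the cell `i`: the last `2` among the
cells `i - 2`, `i - 1`, `i`, and `i - 2` if there is none. -/
def anchor (x : ℤ → Fin 3) (i : ℤ) : ℤ :=
  if x i = 2 then i else if x (i - 1) = 2 then i - 1 else i - 2

/-- The cells covered by the middle part `v` when `uvw` occurs at position `j`. -/
def core (t : Word × Word × Word) (j : ℤ) : Set ℤ :=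
  Set.Ico (j + (t.1.length : ℤ)) (j + (t.1.length : ℤ) + (t.2.1.length : ℤ))

section Tiling

variable {x : ℤ → Fin 3} {i j : ℤ} {t : Word × Word × Word}

lemma isTileStart_of_occursAt (ht : t ∈ Rb) (h : occursAt (t.1 ++ t.2.1 ++ t.2.2) x j) :
    IsTileStart x j := by
  rcases ht with ⟨α, β, γ, rfl⟩ | rfl | rfl | ⟨α, rfl⟩ | rfl | rfl | ⟨α, rfl⟩ | rfl <;>
    simp_all [IsTileStart, add_assoc, emb_ne_two]

lemma eq_tileAt_of_occursAt (ht : t ∈ Rb) (h : occursAt (t.1 ++ t.2.1 ++ t.2.2) x j) :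
    t = tileAt x j := by
  rcases ht with ⟨α, β, γ, rfl⟩ | rfl | rfl | ⟨α, rfl⟩ | rfl | rfl | ⟨α, rfl⟩ | rfl <;>
    simp_all [tileAt, add_assoc, emb_ne_two]

lemma occursAt_tileAt (x : ℤ → Fin 3) (j : ℤ) :
    occursAt ((tileAt x j).1 ++ (tileAt x j).2.1 ++ (tileAt x j).2.2) x j := by
  unfold tileAt
  split_ifs <;> simp_all [add_assoc]

lemma tileAt_mem_Rb_of_eq_two (hx : inVertexShift x) (hj : x j = 2) : tileAt x j ∈ Rb := by
  have no02 : x (j + 1) = 0 → x (j + 2) ≠ 2 := by simpa [add_assoc] using hx (j + 1)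
  have no02' : x (j + 2) = 0 → x (j + 3) ≠ 2 := by simpa [add_assoc] using hx (j + 2)
  obtain h1 | h1 | h1 : x (j + 1) = 0 ∨ x (j + 1) = 1 ∨ x (j + 1) = 2 := by grind
  · obtain h2 | h2 : x (j + 2) = 0 ∨ x (j + 2) = 1 := by grind
    · simp [tileAt, Rb, hj, h1, h2]
    · simp [-Fin.exists_fin_two, tileAt, Rb, hj, h1, h2, exists_eq_emb_iff, ne_or_eq]
  · obtain h2 | h2 | h2 : x (j + 2) = 0 ∨ x (j + 2) = 1 ∨ x (j + 2) = 2 := by grind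
    · simp [-Fin.exists_fin_two, tileAt, Rb, hj, h1, h2, exists_eq_emb_iff, no02' h2]
    · simp [tileAt, Rb, hj, h1, h2]
    · simp [tileAt, Rb, hj, h1, h2]
  · simp [tileAt, Rb, hj, h1]

lemma tileAt_mem_Rb (hx : inVertexShift x) (hj : IsTileStart x j) : tileAt x j ∈ Rb := by
  rcases hj with h2 | ⟨h0, h1, h2⟩
  · exact tileAt_mem_Rb_of_eq_two hx h2
  · obtain ⟨α, hα⟩ := exists_eq_emb_iff.2 h0
    obtain ⟨β, hβ⟩ := exists_eq_emb_iff.2 h1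
    obtain ⟨γ, hγ⟩ := exists_eq_emb_iff.2 h2
    exact .inl ⟨α, β, γ, by rw [tileAt, if_pos h0, ← hα, ← hβ, ← hγ]⟩

lemma mem_core_tileAt_iff_of_eq_two (hj : x j = 2) :
    i ∈ core (tileAt x j) j ↔
      i = j ∨ i = j + 1 ∧ x (j + 1) ≠ 2 ∨ i = j + 2 ∧ x (j + 1) ≠ 2 ∧ x (j + 2) ≠ 2 := by
  unfold core tileAt
  split_ifs <;> simp_all <;> omega

lemma mem_core_tileAt_iff_of_ne_two (hj : x j ≠ 2) :
    i ∈ core (tileAt x j) j ↔ i = j + 2 := by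
  simp only [core, Set.mem_Ico, tileAt, if_pos hj, List.length_cons, List.length_nil]
  omega

lemma eq_anchor_iff : j = anchor x i ↔
    i = j ∧ x j = 2 ∨ i = j + 1 ∧ x j = 2 ∧ x (j + 1) ≠ 2 ∨
      i = j + 2 ∧ x (j + 1) ≠ 2 ∧ x (j + 2) ≠ 2 := by
  unfold anchor
  split_ifs <;> grind

lemma IsTileStart.mem_core_tileAt_iff (hj : IsTileStart x j) :
    i ∈ core (tileAt x j) j ↔ j = anchor x i := by
  rw [eq_anchor_iff]
  rcases hj with h2 | ⟨h0, h1, h2⟩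
  · rw [mem_core_tileAt_iff_of_eq_two h2]
    tauto
  · rw [mem_core_tileAt_iff_of_ne_two h0]
    tauto

lemma isTileStart_anchor (x : ℤ → Fin 3) (i : ℤ) : IsTileStart x (anchor x i) := by
  unfold anchor IsTileStart
  split_ifs <;> grind

end Tiling

/-- The local rule for b covers every cell of every configuration exactly once. -/
theorem Rb_partitions : ∀ x : ℤ → Fin 3, inVertexShift x → ∀ i : ℤ,
    ∃! p : (Word × Word × Word) × ℤ,
      p.1 ∈ Rb ∧ occursAt (p.1.1 ++ p.1.2.1 ++ p.1.2.2) x p.2 ∧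
      p.2 + (p.1.1.length : ℤ) ≤ i ∧ i < p.2 + (p.1.1.length : ℤ) + (p.1.2.1.length : ℤ) := by
  intro x hx i
  have mem_core := (isTileStart_anchor x i).mem_core_tileAt_iff.2 rfl
  refine ⟨(tileAt x (anchor x i), anchor x i),
    ⟨tileAt_mem_Rb hx (isTileStart_anchor x i), occursAt_tileAt x _, mem_core⟩, ?_⟩
  rintro ⟨t, j⟩ ⟨ht, hocc, hcore⟩
  obtain rfl : t = tileAt x j := eq_tileAt_of_occursAt ht hocc
  obtain rfl : j = anchor x i := (isTileStart_of_occursAt ht hocc).mem_core_tileAt_iff.1 hcore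
  rfl
end
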